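/- arXiv:2601.14828 — 5 statements merged into one kernel-verified Lean document; each statement's English description precedes it below -/
import Mathlib

section
/- Let x₁₁, x₁₂, x₂₁, x₂₂ be real numbers satisfying x₁₁·x₂₂ + x₁₂·x₂₁ = 1, and let a be a complex number with b = Im(a) and c = Re(a). Define Num = (x₁₁ − b·x₁₂ − c·x₂₂)² + (x₂₁ + b·x₂₂ − c·x₁₂)², Den = (x₁₁ − b·x₁₂ + c·x₂₂)² + (x₂₁ + b·x₂₂ + c·x₁₂)², and D = (x₁₁ − b·x₁₂)² + (c·x₁₂)² + (x₂₁ + b·x₂₂)² + (c·x₂₂)² + 2c. If Den ≠ 0, then Num/Den = 1 − 4c/D. -/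
/-- Reformulation of the reflectance: under the determinant-one condition,
`R = Num/Den = 1 - 4 Re(a) / D`. -/
theorem reflectance_reformulation (x11 x12 x21 x22 : ℝ)
    (hdet : x11 * x22 + x12 * x21 = 1) (a : ℂ)
    (hDen : (x11 - a.im * x12 + a.re * x22) ^ 2
        + (x21 + a.im * x22 + a.re * x12) ^ 2 ≠ 0) :
    ((x11 - a.im * x12 - a.re * x22) ^ 2 + (x21 + a.im * x22 - a.re * x12) ^ 2)
      / ((x11 - a.im * x12 + a.re * x22) ^ 2 + (x21 + a.im * x22 + a.re * x12) ^ 2)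
      = 1 - 4 * a.re /
        ((x11 - a.im * x12) ^ 2 + (a.re * x12) ^ 2
          + (x21 + a.im * x22) ^ 2 + (a.re * x22) ^ 2 + 2 * a.re) := by
  -- The cross terms of `Den` sum to `2 * a.re * (x11 * x22 + x12 * x21)`, so `Den` equals `D`.
  have hD : (x11 - a.im * x12) ^ 2 + (a.re * x12) ^ 2
      + (x21 + a.im * x22) ^ 2 + (a.re * x22) ^ 2 + 2 * a.re
      = (x11 - a.im * x12 + a.re * x22) ^ 2 + (x21 + a.im * x22 + a.re * x12) ^ 2 := by
    linear_combination (-2 * a.re) * hdet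
  rw [hD, eq_sub_iff_add_eq, ← add_div, div_eq_one_iff_eq hDen]
  linear_combination (-4 * a.re) * hdet
end

section
/- Let x₁₁, x₁₂, x₂₁, x₂₂ be real numbers satisfying x₁₁·x₂₂ + x₁₂·x₂₁ = 1, and let a be a complex number with Re(a) > 0; write b = Im(a), c = Re(a). Define Num = (x₁₁ − b·x₁₂ − c·x₂₂)² + (x₂₁ + b·x₂₂ − c·x₁₂)² and Den = (x₁₁ − b·x₁₂ + c·x₂₂)² + (x₂₁ + b·x₂₂ + c·x₁₂)². Then Den ≥ 2c > 0, and the reflectance R = Num/Den satisfies 0 ≤ R < 1. -/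
/-- For a physical substrate (`Re(a) > 0`) and a determinant-one cumulative
transfer matrix, the reflectance denominator satisfies `Den ≥ 2 Re(a) > 0`,
and the reflectance `R = Num/Den` satisfies `0 ≤ R < 1`. -/
theorem reflectance_bounds (x11 x12 x21 x22 : ℝ)
    (hdet : x11 * x22 + x12 * x21 = 1) (a : ℂ) (ha : 0 < a.re) :
    (0 < 2 * a.re ∧
      2 * a.re ≤ (x11 - a.im * x12 + a.re * x22) ^ 2
        + (x21 + a.im * x22 + a.re * x12) ^ 2) ∧
    (0 ≤ ((x11 - a.im * x12 - a.re * x22) ^ 2 + (x21 + a.im * x22 - a.re * x12) ^ 2)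
        / ((x11 - a.im * x12 + a.re * x22) ^ 2 + (x21 + a.im * x22 + a.re * x12) ^ 2)
      ∧ ((x11 - a.im * x12 - a.re * x22) ^ 2 + (x21 + a.im * x22 - a.re * x12) ^ 2)
        / ((x11 - a.im * x12 + a.re * x22) ^ 2 + (x21 + a.im * x22 + a.re * x12) ^ 2)
        < 1) := by
  -- The terms in `a.im` cancel, and the determinant condition gives `Den - Num = 4 * a.re`.
  have key : (x11 - a.im * x12 + a.re * x22) ^ 2 + (x21 + a.im * x22 + a.re * x12) ^ 2
      = (x11 - a.im * x12 - a.re * x22) ^ 2 + (x21 + a.im * x22 - a.re * x12) ^ 2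
        + 4 * a.re := by
    linear_combination 4 * a.re * hdet
  have hnum : 0 ≤ (x11 - a.im * x12 - a.re * x22) ^ 2
      + (x21 + a.im * x22 - a.re * x12) ^ 2 := by positivity
  rw [key]
  refine ⟨⟨by linarith, by linarith⟩, by positivity, ?_⟩
  rw [div_lt_one (by linarith)]
  linarith
end

section
/- Let l, u ∈ ℝ⁴ with l ≤ u componentwise, and let 𝒳 = {x ∈ ℝ⁴ : lᵢ ≤ xᵢ ≤ uᵢ for i = 1,…,4 and x₁x₂ + x₃x₄ = 1}. Then every extreme point x of the convex hull of 𝒳 satisfies: either (x₁ ∈ {l₁, u₁} and x₂ ∈ {l₂, u₂}), or (x₃ ∈ {l₃, u₃} and x₄ ∈ {l₄, u₄}). -/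
/-!
An extreme point `x` of `convexHull 𝒳` lies in `𝒳`. If neither pair is at a corner, then some
coordinate `x i` of the pair `(x 0, x 1)` and some coordinate `x j` of the pair `(x 2, x 3)` are
strictly between their bounds. With the partners `b` of `x i` and `a` of `x j` held fixed, the
determinant equation is linear in the two free coordinates, so it is preserved along the line
`(x i + t * a, x j - t * b)`. This line is nondegenerate because `x i * b + x j * a = 1` excludes
`a = b = 0`. Small steps in both directions stay in the box, so `x` is the midpoint of a
nontrivial segment with endpoints in `𝒳` (`not_extreme_of_line`), a contradiction.
-/

open Filter Topology in
/-- A value strictly inside an interval stays inside under small moves along a line. -/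
lemma eventually_mem_Icc_of_strict {l u c : ℝ} (a : ℝ) (h : l < c ∧ c < u) :
    ∀ᶠ t : ℝ in 𝓝 0, l ≤ c + t * a ∧ c + t * a ≤ u := by
  have hc : Tendsto (fun t : ℝ => c + t * a) (𝓝 0) (𝓝 c) := by
    have : Continuous fun t : ℝ => c + t * a := by fun_prop
    simpa using this.tendsto 0
  filter_upwards [hc.eventually_const_lt h.1, hc.eventually_lt_const h.2] with t h1 h2
  exact ⟨h1.le, h2.le⟩

open Filter Topology in
/-- A point of `𝒳` with two free coordinates `i`, `j` is not extreme if the determinant equation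
persists along a nondegenerate line in these two coordinates. -/
lemma not_extreme_of_line (l u x : Fin 4 → ℝ) (i j : Fin 4) (hij : i ≠ j) (a b : ℝ)
    (hab : ¬ (a = 0 ∧ b = 0)) (hi : l i < x i ∧ x i < u i) (hj : l j < x j ∧ x j < u j)
    (hline : ∀ t : ℝ, ∀ y : Fin 4 → ℝ,
      y = Function.update (Function.update x i (x i + t * a)) j (x j + t * (-b)) →
        y 0 * y 1 + y 2 * y 3 = 1)
    (hx : x ∈ Set.extremePoints ℝ (convexHull ℝ
      {x : Fin 4 → ℝ | (∀ i, l i ≤ x i ∧ x i ≤ u i) ∧ x 0 * x 1 + x 2 * x 3 = 1})) : False := by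
  have hxX := extremePoints_convexHull_subset hx
  set y : ℝ → Fin 4 → ℝ := fun t =>
    Function.update (Function.update x i (x i + t * a)) j (x j + t * (-b)) with hy
  have yi : ∀ t, y t i = x i + t * a := fun t => by simp [hy, hij]
  have yj : ∀ t, y t j = x j + t * (-b) := fun t => by simp [hy]
  have yk : ∀ t k, k ≠ i → k ≠ j → y t k = x k := fun t k h1 h2 => by simp [hy, h1, h2]
  have hmem : ∀ᶠ t : ℝ in 𝓝 0, y t ∈
      {x : Fin 4 → ℝ | (∀ i, l i ≤ x i ∧ x i ≤ u i) ∧ x 0 * x 1 + x 2 * x 3 = 1} := by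
    filter_upwards [eventually_mem_Icc_of_strict a hi, eventually_mem_Icc_of_strict (-b) hj]
      with t h1 h2
    refine ⟨fun k => ?_, hline t _ rfl⟩
    by_cases hki : k = i
    · subst hki; rw [yi]; exact h1
    by_cases hkj : k = j
    · subst hkj; rw [yj]; exact h2
    rw [yk t k hki hkj]; exact hxX.1 k
  obtain ⟨ε, hε, hball⟩ := Metric.eventually_nhds_iff.1 hmem
  have hp := hball (y := ε / 2) (by rw [Real.dist_eq, abs_lt]; constructor <;> linarith)
  have hn := hball (y := -(ε / 2)) (by rw [Real.dist_eq, abs_lt]; constructor <;> linarith)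
  have hseg : x ∈ openSegment ℝ (y (ε / 2)) (y (-(ε / 2))) := by
    refine ⟨1 / 2, 1 / 2, by norm_num, by norm_num, by norm_num, ?_⟩
    ext k
    simp only [Pi.add_apply, Pi.smul_apply, smul_eq_mul]
    by_cases hki : k = i
    · subst hki; rw [yi, yi]; ring
    by_cases hkj : k = j
    · subst hkj; rw [yj, yj]; ring
    rw [yk _ k hki hkj, yk _ k hki hkj]; ring
  have heq : y (ε / 2) = x :=
    hx.2 (subset_convexHull ℝ _ hp) (subset_convexHull ℝ _ hn) hseg
  have h1 := yi (ε / 2)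
  have h2 := yj (ε / 2)
  rw [heq] at h1 h2
  refine hab ⟨?_, ?_⟩
  · have : ε / 2 * a = 0 := by linarith
    exact (mul_eq_zero.1 this).resolve_left (by linarith)
  · have : ε / 2 * b = 0 := by linarith
    exact (mul_eq_zero.1 this).resolve_left (by linarith)

/-- Extreme points of the convex hull of the set
`𝒳 = {x ∈ [l,u] : x₁x₂ + x₃x₄ = 1}` have the pair `(x₁,x₂)` or the pair
`(x₃,x₄)` at a corner of its box. -/
theorem extremePoints_box_det_surface (l u : Fin 4 → ℝ) (hlu : l ≤ u) :
    ∀ x ∈ Set.extremePoints ℝ (convexHull ℝ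
      {x : Fin 4 → ℝ | (∀ i, l i ≤ x i ∧ x i ≤ u i) ∧ x 0 * x 1 + x 2 * x 3 = 1}),
      ((x 0 = l 0 ∨ x 0 = u 0) ∧ (x 1 = l 1 ∨ x 1 = u 1)) ∨
        ((x 2 = l 2 ∨ x 2 = u 2) ∧ (x 3 = l 3 ∨ x 3 = u 3)) := by
  intro x hx
  obtain ⟨hbox, hdet⟩ := extremePoints_convexHull_subset hx
  have free : ∀ k, ¬ (x k = l k ∨ x k = u k) → l k < x k ∧ x k < u k := fun k hk => by
    rw [not_or] at hk
    exact ⟨lt_of_le_of_ne (hbox k).1 (Ne.symm hk.1), lt_of_le_of_ne (hbox k).2 hk.2⟩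
  by_contra hcon
  rw [not_or, not_and_or, not_and_or] at hcon
  obtain ⟨h0 | h1, h2 | h3⟩ := hcon
  · refine not_extreme_of_line l u x 0 2 (by decide) (x 3) (x 1) ?_ (free _ h0) (free _ h2) ?_ hx
    · rintro ⟨ha, hb⟩; simp [ha, hb] at hdet
    · rintro t y rfl; simp [Function.update_apply]; linarith
  · refine not_extreme_of_line l u x 0 3 (by decide) (x 2) (x 1) ?_ (free _ h0) (free _ h3) ?_ hx
    · rintro ⟨ha, hb⟩; simp [ha, hb] at hdet
    · rintro t y rfl; simp [Function.update_apply]; linarith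
  · refine not_extreme_of_line l u x 1 2 (by decide) (x 3) (x 0) ?_ (free _ h1) (free _ h2) ?_ hx
    · rintro ⟨ha, hb⟩; simp [ha, hb] at hdet
    · rintro t y rfl; simp [Function.update_apply]; linarith
  · refine not_extreme_of_line l u x 1 3 (by decide) (x 2) (x 0) ?_ (free _ h1) (free _ h3) ?_ hx
    · rintro ⟨ha, hb⟩; simp [ha, hb] at hdet
    · rintro t y rfl; simp [Function.update_apply]; linarith
end

section
/- Let β > 0 and 0 < p < q be real numbers, and let K = {(y, β/y) : y ∈ [p, q]} ⊆ ℝ². Then the convex hull of K equals the set {(y₁, y₂) ∈ ℝ² : p ≤ y₁ ≤ q, y₁·y₂ ≥ β, and y₂ ≤ β/p + ((β/q − β/p)/(q − p))·(y₁ − p)}. -/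
/-!
The right-hand side is convex: it is cut out by half-planes and by the condition `β ≤ y₁ y₂`, which
is preserved under convex combinations with positive first coordinates
(`le_mul_of_convex_combination`). It contains the arc, because the chord slope is `-β / (p q)` and
the arc lies below the chord exactly when `(y - p) (q - y) ≥ 0`. Conversely, a point `(a, b)` of the
right-hand side lies on the vertical segment between `(a, β / a)`, a point of the arc, and the
point of the chord above it, which is a convex combination of the two endpoints.
-/

/-- Convexity of the region above one branch of a hyperbola. The mixed terms satisfy
`x v + u y ≥ 2 β` because `(x v + u y)² ≥ 4 (x y) (u v) ≥ 4 β²`. -/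
theorem le_mul_of_convex_combination {β x y u v s t : ℝ} (hβ : 0 < β) (hx : 0 < x) (hu : 0 < u)
    (hxy : β ≤ x * y) (huv : β ≤ u * v) (hs : 0 ≤ s) (ht : 0 ≤ t) (hst : s + t = 1) :
    β ≤ (s * x + t * u) * (s * y + t * v) := by
  have hy : 0 < y := pos_of_mul_pos_right (hβ.trans_le hxy) hx.le
  have hv : 0 < v := pos_of_mul_pos_right (hβ.trans_le huv) hu.le
  have hmul : β * β ≤ (x * y) * (u * v) := mul_le_mul hxy huv hβ.le (by positivity)
  have hmix : 2 * β ≤ x * v + u * y := by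
    refine le_of_abs_le (abs_le_of_sq_le_sq ?_ (by positivity))
    nlinarith [sq_nonneg (x * v - u * y)]
  have hone : β = s ^ 2 * β + t ^ 2 * β + s * t * (2 * β) := by
    linear_combination (-β * (s + t + 1)) * hst
  have h1 := mul_le_mul_of_nonneg_left hxy (sq_nonneg s)
  have h2 := mul_le_mul_of_nonneg_left huv (sq_nonneg t)
  have h3 := mul_le_mul_of_nonneg_left hmix (mul_nonneg hs ht)
  nlinarith

/-- The convex hull of the arc `{(y, β/y) : y ∈ [p, q]}` of the hyperbola
`y₁ y₂ = β` (with `β > 0`, `0 < p < q`) is bounded below by the hyperbola and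
above by the chord through the two endpoints. -/
theorem convexHull_hyperbola_arc (β p q : ℝ) (hβ : 0 < β) (hp : 0 < p) (hpq : p < q) :
    convexHull ℝ {z : ℝ × ℝ | ∃ y : ℝ, p ≤ y ∧ y ≤ q ∧ z = (y, β / y)} =
      {z : ℝ × ℝ | p ≤ z.1 ∧ z.1 ≤ q ∧ β ≤ z.1 * z.2 ∧
        z.2 ≤ β / p + ((β / q - β / p) / (q - p)) * (z.1 - p)} := by
  have hq : 0 < q := hp.trans hpq
  have hd : 0 < q - p := sub_pos.2 hpq
  apply Set.Subset.antisymm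
  · apply convexHull_min
    · rintro _ ⟨y, hpy, hyq, rfl⟩
      have hy : 0 < y := hp.trans_le hpy
      refine ⟨hpy, hyq, (mul_div_cancel₀ β hy.ne').ge, ?_⟩
      have hgap : β / p + ((β / q - β / p) / (q - p)) * (y - p) - β / y
          = β * ((y - p) * (q - y)) / (p * q * y) := by
        field_simp
        ring
      have hnonneg : 0 ≤ β * ((y - p) * (q - y)) / (p * q * y) := by
        have := mul_nonneg (sub_nonneg.2 hpy) (sub_nonneg.2 hyq)
        positivity
      show β / y ≤ β / p + ((β / q - β / p) / (q - p)) * (y - p)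
      linarith
    · rintro ⟨x, y⟩ ⟨hx1, hx2, hx3, hx4⟩ ⟨u, v⟩ ⟨hu1, hu2, hu3, hu4⟩ s t hs ht hst
      simp only [Set.mem_ofPred_eq, Prod.smul_mk, Prod.mk_add_mk, smul_eq_mul] at *
      generalize (β / q - β / p) / (q - p) = m at *
      generalize β / p = c at *
      obtain rfl : t = 1 - s := by linarith
      refine ⟨by nlinarith, by nlinarith, ?_, by nlinarith⟩
      exact le_mul_of_convex_combination hβ (hp.trans_le hx1) (hp.trans_le hu1) hx3 hu3 hs ht hst
  · rintro ⟨a, b⟩ ⟨ha1, ha2, hab, hb⟩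
    simp only at ha1 ha2 hab hb
    have ha : 0 < a := hp.trans_le ha1
    set K := {z : ℝ × ℝ | ∃ y : ℝ, p ≤ y ∧ y ≤ q ∧ z = (y, β / y)}
    have hconv : Convex ℝ (convexHull ℝ K) := convex_convexHull ℝ K
    have hmem : ∀ y, p ≤ y → y ≤ q → (y, β / y) ∈ convexHull ℝ K := fun y h1 h2 =>
      subset_convexHull ℝ K ⟨y, h1, h2, rfl⟩
    have hchord : (a, β / p + ((β / q - β / p) / (q - p)) * (a - p)) ∈ convexHull ℝ K := by
      have h := hconv (hmem p le_rfl hpq.le) (hmem q hpq.le le_rfl)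
        (div_nonneg (sub_nonneg.2 ha2) hd.le) (div_nonneg (sub_nonneg.2 ha1) hd.le)
        (by field_simp; ring)
      convert h using 1
      ext
      · simp only [Prod.smul_mk, Prod.mk_add_mk, smul_eq_mul]
        field_simp
        ring
      · simp only [Prod.smul_mk, Prod.mk_add_mk, smul_eq_mul]
        field_simp
        ring
    have hlow : β / a ≤ b := (div_le_iff₀' ha).2 hab
    apply hconv.segment_subset (hmem a ha1 ha2) hchord
    rw [← Prod.image_mk_segment_right, segment_eq_Icc (hlow.trans hb)]
    exact ⟨b, ⟨hlow, hb⟩, rfl⟩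
end

section
/- Let β, l₁, u₁, l₂, u₂ be real numbers with β > 0, l₁ < 0 < u₁, l₂ < 0 < u₂, u₁·u₂ ≥ β, and l₁·l₂ ≥ β, and let K = {(y₁, y₂) ∈ [l₁,u₁]×[l₂,u₂] : y₁·y₂ = β}. Then every extreme point of the convex hull of K belongs to the set {(β/u₂, u₂), (u₁, β/u₁), (l₁, β/l₁), (β/l₂, l₂)}. -/
/-!
An extreme point of `convexHull ℝ K` lies in `K`, so it is a point `(a, β / a)` of one branch of the
hyperbola. If it is not one of the two endpoints of the part of that branch inside the box, then it
lies strictly between these endpoints `P` and `Q`, while the other branch contributes a point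
`N ∈ K`. The line through `N` and `(a, β / a)` meets the hyperbola in these two points only, so
beyond `(a, β / a)` it has to cross the chord `PQ`. Hence `(a, β / a)` is interior to a segment
joining `N` to a point of the chord and is not extreme
(`not_mem_extremePoints_of_hyperbola`).
-/

/-- A point of one branch of `x * y = β`, strictly between two points of a convex set `C` on the
same branch, is not extreme in `C` as soon as `C` contains a point of the other branch. The
hypotheses on products say that `p`, `a`, `q` have the same sign and `n` the opposite one. -/
lemma not_mem_extremePoints_of_hyperbola {C : Set (ℝ × ℝ)} (hC : Convex ℝ C) {β p a q n : ℝ}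
    (hpa : p < a) (haq : a < q) (hp : 0 < p * a) (hq : 0 < q * a) (hn : n * a < 0)
    (hP : (p, β / p) ∈ C) (hQ : (q, β / q) ∈ C) (hN : (n, β / n) ∈ C) :
    (a, β / a) ∉ C.extremePoints ℝ := by
  intro hext
  have ha0 : a ≠ 0 := by rintro rfl; simp at hp
  have hp0 : p ≠ 0 := by rintro rfl; simp at hp
  have hq0 : q ≠ 0 := by rintro rfl; simp at hq
  have hn0 : n ≠ 0 := by rintro rfl; simp at hn
  have ha2 : 0 < a ^ 2 := by positivity
  have hpq : 0 < p * q := by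
    have : 0 < (p * q) * a ^ 2 := by nlinarith [mul_pos hp hq]
    exact pos_of_mul_pos_left this ha2.le
  have hpn : p * n < 0 := by
    have : (p * n) * a ^ 2 < 0 := by nlinarith [mul_neg_of_pos_of_neg hp hn]
    exact neg_of_mul_neg_left this ha2.le
  have hqn : q * n < 0 := by
    have : (q * n) * a ^ 2 < 0 := by nlinarith [mul_neg_of_pos_of_neg hq hn]
    exact neg_of_mul_neg_left this ha2.le
  obtain ⟨D, hDdef⟩ : ∃ D, D = a * n - p * q := ⟨_, rfl⟩
  have hD : D < 0 := by linarith
  have hna : n * (a - n) < 0 := by nlinarith [sq_nonneg n]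
  have han0 : a - n ≠ 0 := by intro h; simp [h] at hna
  have hqp0 : q - p ≠ 0 := by linarith
  have hD0 : D ≠ 0 := hD.ne
  -- With `N = (n, β / n)` and `z = (a, β / a)`, the line `Nz` crosses the chord from `(p, β / p)`
  -- to `(q, β / q)` at `w = z + t • (z - N)`; `μ` and `ν` are the weights of its ends at `w`.
  obtain ⟨μ, hμ⟩ : ∃ μ, μ = (q - a) * (p * (n - q)) / ((q - p) * D) := ⟨_, rfl⟩
  obtain ⟨ν, hν⟩ : ∃ ν, ν = (a - p) * (q * (n - p)) / ((q - p) * D) := ⟨_, rfl⟩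
  obtain ⟨t, ht⟩ : ∃ t, t = (q - a) * (a - p) * (n * (a - n)) / ((a - n) ^ 2 * D) :=
    ⟨_, rfl⟩
  have hden : (q - p) * D < 0 := mul_neg_of_pos_of_neg (by linarith) hD
  have hμ0 : 0 ≤ μ := by
    rw [hμ]
    exact div_nonneg_of_nonpos
      (mul_nonpos_of_nonneg_of_nonpos (by linarith) (by nlinarith)) hden.le
  have hν0 : 0 ≤ ν := by
    rw [hν]
    exact div_nonneg_of_nonpos
      (mul_nonpos_of_nonneg_of_nonpos (by linarith) (by nlinarith)) hden.le
  have ht0 : 0 < t := by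
    rw [ht]
    exact div_pos_of_neg_of_neg
      (mul_neg_of_pos_of_neg (mul_pos (by linarith) (by linarith)) hna)
      (mul_neg_of_pos_of_neg (by positivity) hD)
  have hsum : μ + ν = 1 := by
    rw [hμ, hν]; field_simp; rw [hDdef]; ring
  have hw := hC hP hQ hμ0 hν0 hsum
  have h1 : μ * p + ν * q = a + t * (a - n) := by
    rw [hμ, hν, ht]; field_simp; rw [hDdef]; ring
  have h2 : μ * (β / p) + ν * (β / q) = β / a + t * (β / a - β / n) := by
    rw [hμ, hν, ht]; field_simp; rw [hDdef]; ring
  have ht1 : 1 + t ≠ 0 := by positivity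
  have hseg : (a, β / a) ∈ openSegment ℝ (n, β / n) (μ • (p, β / p) + ν • (q, β / q)) := by
    refine ⟨t / (1 + t), 1 / (1 + t), by positivity, by positivity, by field_simp; ring, ?_⟩
    simp only [Prod.smul_mk, Prod.mk_add_mk, smul_eq_mul, h1, h2]
    refine Prod.ext ?_ ?_
    · simp only; field_simp; ring
    · simp only; field_simp; ring
  have heq := hext.2 hN hw hseg
  have : n = a := congrArg Prod.fst heq
  exact han0 (by linarith)

/-- In the "polytope" case, when the bound box intersects the hyperbola
`y₁ y₂ = β` in both the positive and negative orthants, the extreme points of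
the convex hull of `K = {(y₁,y₂) ∈ [l₁,u₁]×[l₂,u₂] : y₁y₂ = β}` are among the
four points `(β/u₂, u₂)`, `(u₁, β/u₁)`, `(l₁, β/l₁)`, `(β/l₂, l₂)`. -/
theorem extremePoints_hyperbola_box (β l₁ u₁ l₂ u₂ : ℝ) (hβ : 0 < β)
    (hl₁ : l₁ < 0) (hu₁ : 0 < u₁) (hl₂ : l₂ < 0) (hu₂ : 0 < u₂)
    (hpos : β ≤ u₁ * u₂) (hneg : β ≤ l₁ * l₂) :
    ∀ z ∈ Set.extremePoints ℝ (convexHull ℝ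
      {z : ℝ × ℝ | l₁ ≤ z.1 ∧ z.1 ≤ u₁ ∧ l₂ ≤ z.2 ∧ z.2 ≤ u₂ ∧ z.1 * z.2 = β}),
      z ∈ ({(β / u₂, u₂), (u₁, β / u₁), (l₁, β / l₁), (β / l₂, l₂)} :
        Set (ℝ × ℝ)) := by
  intro z hz
  have hK := extremePoints_convexHull_subset hz
  obtain ⟨a, b⟩ := z
  obtain ⟨hla, hau, hlb, hbu, hab⟩ := hK
  simp only at hla hau hlb hbu hab
  have ha0 : a ≠ 0 := by rintro rfl; simp at hab; linarith
  obtain rfl : b = β / a := by field_simp; linarith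
  by_contra hne
  simp only [Set.mem_insert_iff, Set.mem_singleton_iff, not_or] at hne
  obtain ⟨hne1, hne2, hne3, hne4⟩ := hne
  have hau' : a < u₁ := lt_of_le_of_ne hau (by rintro rfl; exact hne2 rfl)
  have hla' : l₁ < a := lt_of_le_of_ne hla (by rintro rfl; exact hne3 rfl)
  have hbu' : β / a < u₂ := lt_of_le_of_ne hbu (by
    rintro rfl; exact hne1 (by rw [div_div_cancel₀ hβ.ne']))
  have hlb' : l₂ < β / a := lt_of_le_of_ne hlb (by
    rintro rfl; exact hne4 (by rw [div_div_cancel₀ hβ.ne']))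
  have e1 : β / u₂ ≤ u₁ := by rw [div_le_iff₀ hu₂]; exact hpos
  have e2 : β / u₁ ≤ u₂ := by rw [div_le_iff₀ hu₁]; linarith
  have e3 : l₁ ≤ β / l₂ := by rw [le_div_iff_of_neg hl₂]; exact hneg
  have e4 : l₂ ≤ β / l₁ := by rw [le_div_iff_of_neg hl₁]; linarith
  have p1 : 0 < β / u₂ := div_pos hβ hu₂
  have p2 : 0 < β / u₁ := div_pos hβ hu₁
  have p3 : β / l₂ < 0 := div_neg_of_pos_of_neg hβ hl₂
  have p4 : β / l₁ < 0 := div_neg_of_pos_of_neg hβ hl₁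
  have hC := convex_convexHull ℝ
    {z : ℝ × ℝ | l₁ ≤ z.1 ∧ z.1 ≤ u₁ ∧ l₂ ≤ z.2 ∧ z.2 ≤ u₂ ∧ z.1 * z.2 = β}
  rcases lt_or_gt_of_ne ha0 with ha | ha
  · have hlt : a < β / l₂ := by
      rw [lt_div_iff_of_neg hl₂]
      rw [lt_div_iff_of_neg ha] at hlb'
      linarith
    refine not_mem_extremePoints_of_hyperbola hC (p := l₁) (q := β / l₂) (n := u₁) hla' hlt
      (mul_pos_of_neg_of_neg hl₁ ha) (mul_pos_of_neg_of_neg p3 ha)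
      (mul_neg_of_pos_of_neg hu₁ ha) ?_ ?_ ?_ hz <;> apply subset_convexHull
    · exact ⟨le_rfl, by linarith, e4, by linarith, mul_div_cancel₀ _ hl₁.ne⟩
    · rw [div_div_cancel₀ hβ.ne']
      exact ⟨e3, by linarith, le_rfl, by linarith, div_mul_cancel₀ _ hl₂.ne⟩
    · exact ⟨by linarith, le_rfl, by linarith, e2, mul_div_cancel₀ _ hu₁.ne'⟩
  · have hlt : β / u₂ < a := by
      rw [div_lt_iff₀ hu₂]
      rw [div_lt_iff₀ ha] at hbu'
      linarith
    refine not_mem_extremePoints_of_hyperbola hC (p := β / u₂) (q := u₁) (n := l₁) hlt hau'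
      (mul_pos p1 ha) (mul_pos hu₁ ha)
      (mul_neg_of_neg_of_pos hl₁ ha) ?_ ?_ ?_ hz <;> apply subset_convexHull
    · rw [div_div_cancel₀ hβ.ne']
      exact ⟨by linarith, e1, by linarith, le_rfl, div_mul_cancel₀ _ hu₂.ne'⟩
    · exact ⟨by linarith, le_rfl, by linarith, e2, mul_div_cancel₀ _ hu₁.ne'⟩
    · exact ⟨le_rfl, by linarith, e4, by linarith, mul_div_cancel₀ _ hl₁.ne⟩
end
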